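/- Let Γ be a reduced, non-ascending labeled graph with all labels positive, and let e, f be mobile edges of Γ with f ∉ {e, ē}. Then it is impossible that e can slide over f in Γ (yielding a reduced labeled graph Γ′) and that, in Γ′, f̄ can then slide over ē. -/

import Mathlib

/-! Labeled graphs in the sense of generalized Baumslag–Solitar theory. -/

structure LGraph (V E : Type) where
  o : E → V
  bar : E → E
  bar_bar : ∀ e, bar (bar e) = e
  bar_ne : ∀ e, bar e ≠ e
  lab : E → ℤ

namespace LGraph

variable {V E V' E' : Type}

/-- Terminal vertex of an oriented edge. -/
def t (G : LGraph V E) (e : E) : V := G.o (G.bar e)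

/-- All labels are positive. -/
def Positive (G : LGraph V E) : Prop := ∀ e : E, 0 < G.lab e

/-- No collapsible edge: every label-1 edge is a loop. -/
def Reduced (G : LGraph V E) : Prop := ∀ e : E, G.lab e = 1 → G.o e = G.t e

/-- An `n`-rose: one vertex and `n` pairs of oriented edges. -/
def IsRose (G : LGraph V E) (n : ℕ) : Prop :=
  Nat.card V = 1 ∧ Nat.card E = 2 * n

/-- Modulus of a single oriented edge: `λ(ē)/λ(e)`. -/
def qe (G : LGraph V E) (e : E) : ℚ := (G.lab (G.bar e) : ℚ) / (G.lab e : ℚ)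

/-- Modulus of an edge path. -/
def q (G : LGraph V E) (l : List E) : ℚ := (l.map G.qe).prod

/-- Consecutive edges match up. -/
def IsEdgePath (G : LGraph V E) (l : List E) : Prop :=
  List.Chain' (fun a b => G.t a = G.o b) l

/-- An `e`-edge path. -/
def IsEEdgePath (G : LGraph V E) (e : E) (l : List E) : Prop :=
  G.IsEdgePath l ∧
  (∀ a ∈ l, a ≠ e ∧ a ≠ G.bar e) ∧
  (∀ a ∈ l.head?, G.o a = G.o e) ∧
  ∀ i : Fin l.length, ∃ k : ℤ,
    (G.lab e : ℚ) * G.q (l.take i.1) = (k : ℚ) * (G.lab (l.get i) : ℚ)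

/-- A monotone cycle `(e₁,…,eₛ,e)`. -/
def IsMonotoneCycle (G : LGraph V E) (l : List E) (e : E) : Prop :=
  G.IsEEdgePath (G.bar e) l ∧
  G.t (l.getLastD e) = G.o e ∧
  ∃ k : ℤ, G.q (l ++ [e]) = (k : ℚ)

/-- A strict monotone cycle. -/
def IsStrictMonotoneCycle (G : LGraph V E) (l : List E) (e : E) : Prop :=
  G.IsMonotoneCycle l e ∧ G.q (l ++ [e]) ≠ 1

def HasStrictMonotoneCycle (G : LGraph V E) : Prop :=
  ∃ (l : List E) (e : E), G.IsStrictMonotoneCycle l e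

/-- A strict `e`-integer cycle. -/
def IsStrictIntegerCycle (G : LGraph V E) (e : E) (l : List E) : Prop :=
  G.IsEEdgePath e l ∧ l ≠ [] ∧
  G.t (l.getLastD e) = G.o (l.headD e) ∧
  (∃ k : ℤ, G.q l = (k : ℚ)) ∧ G.q l ≠ 1

/-- A mobile edge. -/
def Mobile (G : LGraph V E) (e : E) : Prop :=
  (∃ l, G.IsStrictMonotoneCycle l e ∨ G.IsStrictMonotoneCycle l (G.bar e)) ∨
  (∃ l, G.IsStrictIntegerCycle e l ∨ G.IsStrictIntegerCycle (G.bar e) l)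

/-- The single slide of `e` over `f` is permitted. -/
def CanSlide (G : LGraph V E) (e f : E) : Prop :=
  f ≠ e ∧ f ≠ G.bar e ∧ G.o f = G.o e ∧ G.lab f ∣ G.lab e

open Classical in
/-- The result of the single slide of `e` over `f`. -/
noncomputable def slide (G : LGraph V E) (e f : E) : LGraph V E where
  o := fun x => if x = e then G.t f else G.o x
  bar := G.bar
  bar_bar := G.bar_bar
  bar_ne := G.bar_ne
  lab := fun x => if x = e then G.lab e * G.lab (G.bar f) / G.lab f else G.lab x

/-- Successively slide `e` over the edges of a path. -/
noncomputable def slidePath : LGraph V E → E → List E → LGraph V E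
  | G, _, [] => G
  | G, e, f :: l => slidePath (G.slide e f) e l

/-- Each single slide in the successive slide of `e` over a path is permitted. -/
def CanSlidePath : LGraph V E → E → List E → Prop
  | _, _, [] => True
  | G, e, f :: l => G.CanSlide e f ∧ CanSlidePath (G.slide e f) e l

/-- Each single slide is permitted and each intermediate graph is reduced. -/
def GoodSlidePath : LGraph V E → E → List E → Prop
  | _, _, [] => True
  | G, e, f :: l => G.CanSlide e f ∧ (G.slide e f).Reduced ∧ GoodSlidePath (G.slide e f) e l

/-- Perform a finite sequence of single slides, given as pairs (slid edge, edge slid over). -/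
noncomputable def slideSeq : LGraph V E → List (E × E) → LGraph V E
  | G, [] => G
  | G, p :: rest => slideSeq (G.slide p.1 p.2) rest

/-- A sequence of permitted single slides, each sliding a mobile edge. -/
def MobileSlideSeq : LGraph V E → List (E × E) → Prop
  | _, [] => True
  | G, p :: rest => G.Mobile p.1 ∧ G.CanSlide p.1 p.2 ∧ MobileSlideSeq (G.slide p.1 p.2) rest

/-- Isomorphism of labeled graphs. -/
def Isom (G : LGraph V E) (G' : LGraph V' E') : Prop :=
  ∃ (φ : V → V') (Φ : E → E'),
    Function.Bijective φ ∧ Function.Bijective Φ ∧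
    (∀ x, G'.o (Φ x) = φ (G.o x)) ∧
    (∀ x, G'.bar (Φ x) = Φ (G.bar x)) ∧
    (∀ x, G'.lab (Φ x) = G.lab x)

open Classical in
/-- The result of the induction move at the loop `e` with multiplier `m`. -/
noncomputable def inductionMove (G : LGraph V E) (e : E) (m : ℤ) : LGraph V E where
  o := G.o
  bar := G.bar
  bar_bar := G.bar_bar
  bar_ne := G.bar_ne
  lab := fun x => if x ≠ e ∧ x ≠ G.bar e ∧ G.o x = G.o e then m * G.lab x else G.lab x

/-- `G'` is obtained from `G` by a single slide move (up to isomorphism). -/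
def IsSlideMove (G : LGraph V E) (G' : LGraph V' E') : Prop :=
  ∃ e f, G.CanSlide e f ∧ Isom G' (G.slide e f)

/-- `G'` is obtained from `G` by a (forward) induction move. -/
def IsInductionMove (G : LGraph V E) (G' : LGraph V' E') : Prop :=
  ∃ (e : E) (m : ℤ), G.o e = G.t e ∧ G.lab e = 1 ∧ 1 ≤ m ∧ m ∣ G.lab (G.bar e) ∧
    Isom G' (G.inductionMove e m)

/-- `G'` is obtained from `G` by an A-move. -/
def IsAMove (G : LGraph V E) (G' : LGraph V' E') : Prop :=
  ∃ (e d : E) (e' : E') (φ : V → V') (Φ : E → E'),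
    G.o e = G.t e ∧ G.lab e = 1 ∧ G.lab (G.bar e) ≠ 1 ∧
    G.o d = G.o e ∧ G.t d ≠ G.o e ∧
    G.lab d ≠ 1 ∧ G.lab (G.bar d) ≠ 1 ∧ G.lab d ∣ G.lab (G.bar e) ∧
    (∀ x : E, G.o x = G.o e → x = e ∨ x = G.bar e ∨ x = d) ∧
    G'.o e' = φ (G.t d) ∧ G'.t e' = φ (G.t d) ∧
    G'.lab e' = G.lab (G.bar d) ∧
    G'.lab (G'.bar e') = G.lab (G.bar d) * G.lab (G.bar e) ∧
    (∀ w₁ w₂ : V, w₁ ≠ G.o e → w₂ ≠ G.o e → φ w₁ = φ w₂ → w₁ = w₂) ∧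
    (∀ v' : V', ∃ w : V, w ≠ G.o e ∧ φ w = v') ∧
    (∀ x : E, x ≠ e → x ≠ G.bar e → x ≠ d → x ≠ G.bar d →
      Φ x ≠ e' ∧ Φ x ≠ G'.bar e' ∧
      G'.o (Φ x) = φ (G.o x) ∧ G'.bar (Φ x) = Φ (G.bar x) ∧ G'.lab (Φ x) = G.lab x) ∧
    (∀ x y : E, x ≠ e → x ≠ G.bar e → x ≠ d → x ≠ G.bar d →
      y ≠ e → y ≠ G.bar e → y ≠ d → y ≠ G.bar d → Φ x = Φ y → x = y) ∧
    (∀ y : E', y ≠ e' → y ≠ G'.bar e' →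
      ∃ x : E, x ≠ e ∧ x ≠ G.bar e ∧ x ≠ d ∧ x ≠ G.bar d ∧ Φ x = y)

/-- A strict ascending loop: a loop with `λ(e) = 1 ≠ λ(ē)`. -/
def HasStrictAscendingLoop (G : LGraph V E) : Prop :=
  ∃ e : E, G.o e = G.t e ∧ G.lab e = 1 ∧ G.lab (G.bar e) ≠ 1

end LGraph

/-- A labeled graph with its vertex and edge types bundled. -/
structure BGraph where
  V : Type
  E : Type
  G : LGraph V E

/-- An elementary deformation move: a slide, an induction move or its inverse,
or an A-move or its inverse. -/
def BGraph.ElemMove (X Y : BGraph) : Prop :=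
  LGraph.IsSlideMove X.G Y.G ∨ LGraph.IsInductionMove X.G Y.G ∨
  LGraph.IsInductionMove Y.G X.G ∨ LGraph.IsAMove X.G Y.G ∨ LGraph.IsAMove Y.G X.G

/-- A finite sequence of elementary moves with all intermediate graphs reduced. -/
def BGraph.MoveSeq : BGraph → BGraph → Prop :=
  Relation.ReflTransGen (fun X Y => X.ElemMove Y ∧ Y.G.Reduced)

/-- A reduced labeled graph is non-ascending if no reduced labeled graph obtained from it
by slide, induction and A-moves (all intermediate graphs reduced) contains a
strict ascending loop. -/
def LGraph.NonAscending {V E : Type} (G : LGraph V E) : Prop :=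
  ∀ Y : BGraph, BGraph.MoveSeq ⟨V, E, G⟩ Y → ¬ Y.G.HasStrictAscendingLoop

/-!
The invariant behind the proof is the pair formed by the origin and the label of `e`, viewed while
`e` slides over edges other than `e` and `ē`. If this end can be brought from `(o(e), λ(e))` to
`(t(e), n · λ(ē))`, then `e` has become a loop whose label at one end divides the one at the other.
An inverse A-move turns such a loop into a strict ascending loop unless `n = 1`.

A strict monotone cycle produces such a motion with `n ≠ 1`. So does the forbidden pair of slides,
unless `f` is parallel to `e` with the same labels; but then a strict `e`-integer cycle followed by
`f` is again such a motion, so that `e` cannot be mobile.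
-/

namespace LGraph

variable {V E : Type} {G : LGraph V E} {e f : E}

theorem bar_involutive (G : LGraph V E) : Function.Involutive G.bar := G.bar_bar

theorem Positive.lab_ne_zero (hpos : G.Positive) (e : E) : G.lab e ≠ 0 := (hpos e).ne'

theorem NonAscending.lab_bar_eq_one (hna : G.NonAscending) (hred : G.Reduced)
    (he : G.lab e = 1) : G.lab (G.bar e) = 1 := by
  by_contra hbar
  exact hna ⟨V, E, G⟩ .refl ⟨e, hred e he, he, hbar⟩

theorem NonAscending.slide (hna : G.NonAscending) (h : G.CanSlide e f)
    (hred : (G.slide e f).Reduced) : (G.slide e f).NonAscending := by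
  have hmove : (BGraph.mk V E G).ElemMove ⟨V, E, G.slide e f⟩ :=
    .inl ⟨e, f, h, id, id, Function.bijective_id, Function.bijective_id,
      fun _ => rfl, fun _ => rfl, fun _ => rfl⟩
  exact fun Y hY => hna Y (.head ⟨hmove, hred⟩ hY)

section BlowUp

open Classical in
/-- The inverse A-move at a loop `e` with labels `b` and `b * n`: the loop, now with labels `1` and
`n`, is moved to a new vertex `none`, which the new edge `Sum.inr true`, with labels `n` and `b`,
joins to the old base point. -/
noncomputable def blowUp (G : LGraph V E) (e : E) (n : ℤ) : LGraph (Option V) (E ⊕ Bool) where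
  o
    | .inl x => if x = e ∨ x = G.bar e then none else some (G.o x)
    | .inr true => none
    | .inr false => some (G.o e)
  bar := Sum.map G.bar not
  bar_bar := by rintro (x | x) <;> simp [G.bar_bar]
  bar_ne := by rintro (x | x) <;> simp [G.bar_ne]
  lab
    | .inl x => if x = e then 1 else if x = G.bar e then n else G.lab x
    | .inr true => n
    | .inr false => G.lab e

variable {n : ℤ}

theorem Reduced.blowUp (hred : G.Reduced) (he : G.lab e ≠ 1) (hn : n ≠ 1) :
    (G.blowUp e n).Reduced := by
  rintro (x | _ | _) hx
  · by_cases hxe : x = e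
    · simp [hxe, LGraph.blowUp, t]
    by_cases hxe' : x = G.bar e
    · simp [hxe', LGraph.blowUp, G.bar_ne, hn] at hx
    have hbx : G.bar x ≠ e := mt G.bar_involutive.eq_iff.1 hxe'
    have hbx' : G.bar x ≠ G.bar e := G.bar_involutive.injective.ne hxe
    have hlab : G.lab x = 1 := by simpa [LGraph.blowUp, hxe, hxe'] using hx
    simpa [LGraph.blowUp, t, hxe, hxe', hbx, hbx'] using hred x hlab
  · exact absurd hx he
  · exact absurd hx hn

theorem isAMove_blowUp (hloop : G.o e = G.t e) (hlab : G.lab (G.bar e) = G.lab e * n)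
    (he : G.lab e ≠ 1) (hn : n ≠ 1) : IsAMove (G.blowUp e n) G := by
  have hbe := G.bar_ne e
  refine ⟨.inl e, .inr true, e, fun v => v.getD (G.o e), Sum.elim id fun _ => e, ?_, ?_, ?_, ?_,
    ?_, ?_, ?_, ?_, ?edges_at_none, ?_, ?_, ?_, ?_, ?vertex_injective, ?vertex_surjective,
    ?edge_compatible, ?edge_injective, ?edge_surjective⟩
  case edges_at_none =>
    rintro (x | _ | _) hx
    · by_contra! hne
      simp_all [blowUp]
    · simp [blowUp] at hx
    · simp
  case vertex_injective =>
    rintro (_ | w₁) (_ | w₂) h₁ h₂ h <;> simp_all [blowUp]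
  case vertex_surjective => exact fun w => ⟨some w, by simp [blowUp], rfl⟩
  case edge_compatible =>
    rintro (x | _ | _) <;> simp +contextual [blowUp]
  case edge_injective =>
    rintro (x | _ | _) (y | _ | _) <;> simp [blowUp]
  case edge_surjective =>
    exact fun y hy hy' => ⟨.inl y, by simpa using hy, by simpa [blowUp] using hy', by simp,
      by simp [blowUp], rfl⟩
  all_goals simp [blowUp, t, hbe, he, hn, hlab, hloop]

end BlowUp

theorem NonAscending.eq_one_of_loop {n : ℤ} (hna : G.NonAscending) (hred : G.Reduced)
    (hloop : G.o e = G.t e) (hlab : G.lab (G.bar e) = G.lab e * n) : n = 1 := by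
  by_contra hn
  by_cases he : G.lab e = 1
  · exact hn (by simpa [he, hna.lab_bar_eq_one hred he] using hlab.symm)
  have hmove : (BGraph.mk V E G).ElemMove ⟨_, _, G.blowUp e n⟩ :=
    .inr (.inr (.inr (.inr (isAMove_blowUp hloop hlab he hn))))
  refine hna ⟨_, _, G.blowUp e n⟩ (.single ⟨hmove, hred.blowUp he hn⟩) ⟨.inl e, ?_⟩
  simp [blowUp, t, G.bar_ne, hn]

section Reattach

open Classical in
/-- The graph `G` with the origin of `e` moved to `v` and the label of `e` replaced by `x`. Every
slide of `e` has a result of this form, which makes successive slides of `e` easy to compare. -/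
noncomputable def reattach (G : LGraph V E) (e : E) (v : V) (x : ℤ) : LGraph V E where
  o := fun z => if z = e then v else G.o z
  bar := G.bar
  bar_bar := G.bar_bar
  bar_ne := G.bar_ne
  lab := fun z => if z = e then x else G.lab z

theorem reattach_self (G : LGraph V E) (e : E) : G.reattach e (G.o e) (G.lab e) = G := by
  cases G
  simp only [reattach, mk.injEq, true_and]
  constructor <;> funext z <;> split_ifs with hz <;> simp only [hz]

theorem slide_reattach (hf : f ≠ e) (hf' : f ≠ G.bar e) (h0 : G.lab f ≠ 0) (v : V) (k : ℤ) :
    (G.reattach e v (k * G.lab f)).slide e f =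
      G.reattach e (G.t f) (k * G.lab (G.bar f)) := by
  have hbf : G.bar f ≠ e := mt G.bar_involutive.eq_iff.1 hf'
  simp only [reattach, slide, mk.injEq, true_and, t]
  constructor <;> funext z <;> by_cases hz : z = e
  · simp [hz, hbf]
  · simp [hz]
  · simp only [hz, hf, hbf, if_true, if_false]
    rw [mul_right_comm, Int.mul_ediv_cancel _ h0]
  · simp [hz]

theorem Reduced.reattach (hred : G.Reduced) {v : V} {x : ℤ}
    (h : x = 1 ∨ G.lab (G.bar e) = 1 → v = G.t e) : (G.reattach e v x).Reduced := by
  have hbe := G.bar_ne e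
  intro z hz
  by_cases hze : z = e
  · subst hze
    simpa [LGraph.reattach, t, hbe] using h (.inl (by simpa [LGraph.reattach] using hz))
  have hlab : G.lab z = 1 := by simpa [LGraph.reattach, hze] using hz
  by_cases hbz : G.bar z = e
  · subst hbz
    have hv := h (.inr (by rwa [G.bar_bar]))
    simp [LGraph.reattach, t, hze, hv, G.bar_bar]
  · simpa [LGraph.reattach, t, hze, hbz] using hred z hlab

theorem NonAscending.eq_one_of_reattach {n : ℤ}
    (hna : (G.reattach e (G.t e) (n * G.lab (G.bar e))).NonAscending) (hred : G.Reduced) :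
    n = 1 := by
  have hbe := G.bar_ne e
  refine hna.eq_one_of_loop (e := G.bar e) (hred.reattach fun _ => rfl) ?_ ?_
  · simp [reattach, t, hbe, G.bar_bar]
  · simp [reattach, hbe, G.bar_bar, mul_comm]

end Reattach

section SlideReach

/-- The effect on the end of `e`, recorded as its vertex together with its label, of sliding `e`
over one edge of `G`. -/
inductive SlideStep (G : LGraph V E) (e : E) : V × ℤ → V × ℤ → Prop
  | over (f : E) (k : ℤ) (hf : f ≠ e) (hf' : f ≠ G.bar e) :
      SlideStep G e (G.o f, k * G.lab f) (G.t f, k * G.lab (G.bar f))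

/-- The effect on the end of `e` of finitely many successive slides of `e`. -/
abbrev SlideReach (G : LGraph V E) (e : E) : V × ℤ → V × ℤ → Prop :=
  Relation.ReflTransGen (G.SlideStep e)

variable {p r : V × ℤ}

theorem SlideReach.label_eq_one (h : G.SlideReach e p r) (hpos : G.Positive) (hred : G.Reduced)
    (hna : G.NonAscending) (hp : p.2 = 1) : r.2 = 1 := by
  induction h with
  | refl => exact hp
  | tail _ hstep ih =>
    obtain ⟨f, k, -, -⟩ := hstep
    have hf : G.lab f = 1 := Int.eq_one_of_mul_eq_one_left (hpos f).le ih
    have hk : k = 1 := by simpa [hf] using ih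
    simp [hk, hna.lab_bar_eq_one hred hf]

theorem SlideReach.nonAscending_reattach (h : G.SlideReach e p r) (hpos : G.Positive)
    (hred : G.Reduced) (hna : G.NonAscending) (hbar : G.lab (G.bar e) ≠ 1) (hr : r.2 ≠ 1)
    (hp : (G.reattach e p.1 p.2).NonAscending) : (G.reattach e r.1 r.2).NonAscending := by
  induction h using Relation.ReflTransGen.head_induction_on with
  | refl => exact hp
  | head hstep hrest ih =>
    -- Labels equal to `1` persist, so all intermediate labels differ from `1` as the last one does.
    have hlabel := mt (SlideReach.label_eq_one hrest hpos hred hna) hr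
    obtain ⟨f, k, hf, hf'⟩ := hstep
    have hslide := slide_reattach hf hf' (hpos.lab_ne_zero f) (G.o f) k
    have hcan : (G.reattach e (G.o f) (k * G.lab f)).CanSlide e f :=
      ⟨hf, hf', by simp [reattach], by simp [reattach, hf]⟩
    have hred' : (G.reattach e (G.t f) (k * G.lab (G.bar f))).Reduced :=
      hred.reattach fun h => (h.elim hlabel hbar).elim
    exact ih (hslide ▸ hp.slide hcan (hslide ▸ hred'))

theorem SlideReach.factor_eq_one {n : ℤ}
    (h : G.SlideReach e (G.o e, G.lab e) (G.t e, n * G.lab (G.bar e))) (hpos : G.Positive)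
    (hred : G.Reduced) (hna : G.NonAscending) : n = 1 := by
  by_cases hlabel : n * G.lab (G.bar e) = 1
  · have hbar : G.lab (G.bar e) = 1 := Int.eq_one_of_mul_eq_one_left (hpos _).le hlabel
    simpa [hbar] using hlabel
  have hbar : G.lab (G.bar e) ≠ 1 := by
    intro hbar
    have he : G.lab e = 1 := by simpa [G.bar_bar] using hna.lab_bar_eq_one hred hbar
    exact hlabel (h.label_eq_one hpos hred hna he)
  refine (h.nonAscending_reattach hpos hred hna hbar hlabel ?_).eq_one_of_reattach hred
  rwa [reattach_self]

end SlideReach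

section EdgePath

variable {l : List E}

theorem q_append_singleton (G : LGraph V E) (l : List E) (f : E) :
    G.q (l ++ [f]) = G.q l * (G.lab (G.bar f) / G.lab f) := by
  simp [q, qe]

-- The end of an `e`-edge path `l` is `t (l.getLastD ē)`; for `l = []` this is `o(e)`.
theorem IsEEdgePath.of_append_singleton (h : G.IsEEdgePath e (l ++ [f])) :
    G.IsEEdgePath e l ∧ f ≠ e ∧ f ≠ G.bar e ∧ G.o f = G.t (l.getLastD (G.bar e)) ∧
      ∃ k : ℤ, G.lab e * G.q l = k * G.lab f := by
  obtain ⟨hpath, hmem, hhead, hdvd⟩ := h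
  obtain ⟨hl, -, hlast⟩ := List.isChain_append.1 hpath
  obtain ⟨hf, hf'⟩ := hmem f (by simp)
  refine ⟨⟨hl, fun a ha => hmem a (by simp [ha]), fun a ha => hhead a ?_, fun i => ?_⟩,
    hf, hf', ?_, ?_⟩
  · exact List.mem_head?_append_of_mem_head? ha
  · simpa [List.take_append_of_le_length i.2.le] using hdvd ⟨i, by simp⟩
  · rcases List.eq_nil_or_concat l with rfl | ⟨l, a, rfl⟩
    · simpa [t, G.bar_bar] using hhead f
    · simpa using (hlast a (by simp) f (by simp)).symm
  · simpa using hdvd ⟨l.length, by simp⟩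

theorem IsEEdgePath.exists_slideReach (h0 : ∀ f, G.lab f ≠ 0) (h : G.IsEEdgePath e l) :
    ∃ y : ℤ, y = G.lab e * G.q l ∧
      G.SlideReach e (G.o e, G.lab e) (G.t (l.getLastD (G.bar e)), y) := by
  induction l using List.reverseRecOn with
  | nil => exact ⟨G.lab e, by simp [q], by simpa [t, G.bar_bar] using .refl⟩
  | append_singleton l f ih =>
    obtain ⟨hl, hf, hf', hof, k, hk⟩ := h.of_append_singleton
    obtain ⟨y, hy, hreach⟩ := ih hl
    have hyk : y = k * G.lab f := by exact_mod_cast hy.trans hk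
    have hlab : (G.lab f : ℚ) ≠ 0 := mod_cast h0 f
    refine ⟨k * G.lab (G.bar f), ?_, ?_⟩
    · rw [q_append_singleton, ← mul_assoc, hk]
      push_cast
      field_simp
    · rw [← hof, hyk] at hreach
      simpa using hreach.tail (.over f k hf hf')

theorem not_isStrictMonotoneCycle (hpos : G.Positive) (hred : G.Reduced) (hna : G.NonAscending) :
    ¬ G.IsStrictMonotoneCycle l e := by
  rintro ⟨⟨hpath, hend, n, hn⟩, hstrict⟩
  obtain ⟨y, hy, hreach⟩ := hpath.exists_slideReach hpos.lab_ne_zero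
  have he : (G.lab e : ℚ) ≠ 0 := mod_cast hpos.lab_ne_zero e
  have hyn : y = n * G.lab e := by
    rw [q_append_singleton, ← mul_div_assoc, div_eq_iff he, mul_comm] at hn
    exact_mod_cast hy.trans hn
  rw [G.bar_bar, hend, hyn] at hreach
  have hn1 : n = 1 := SlideReach.factor_eq_one (e := G.bar e) (by simpa [t, G.bar_bar] using hreach)
    hpos hred hna
  exact hstrict (by rw [hn, hn1, Int.cast_one])

end EdgePath

section Parallel

/-- `f` is a second copy of `e`: another edge with the same endpoints and the same labels. -/
structure IsParallel (G : LGraph V E) (e f : E) : Prop where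
  ne : f ≠ e
  ne_bar : f ≠ G.bar e
  o_eq : G.o f = G.o e
  t_eq : G.t f = G.t e
  lab_eq : G.lab f = G.lab e
  lab_bar_eq : G.lab (G.bar f) = G.lab (G.bar e)

theorem IsParallel.bar (h : G.IsParallel e f) : G.IsParallel (G.bar e) (G.bar f) where
  ne := G.bar_involutive.injective.ne h.ne
  ne_bar := G.bar_involutive.injective.ne h.ne_bar
  o_eq := h.t_eq
  t_eq := by simpa only [t, G.bar_bar] using h.o_eq
  lab_eq := h.lab_bar_eq
  lab_bar_eq := by simpa only [G.bar_bar] using h.lab_eq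

theorem IsParallel.not_isStrictIntegerCycle {l : List E} (h : G.IsParallel e f)
    (hpos : G.Positive) (hred : G.Reduced) (hna : G.NonAscending) :
    ¬ G.IsStrictIntegerCycle e l := by
  rintro ⟨hpath, hne, hend, ⟨n, hn⟩, hstrict⟩
  obtain ⟨y, hy, hreach⟩ := hpath.exists_slideReach hpos.lab_ne_zero
  have hyn : y = n * G.lab f := by
    rw [hn, mul_comm, ← h.lab_eq] at hy
    exact_mod_cast hy
  have hclosed : G.t (l.getLastD (G.bar e)) = G.o f := by
    obtain ⟨a, l, rfl⟩ := List.exists_cons_of_ne_nil hne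
    exact hend.trans ((hpath.2.2.1 a rfl).trans h.o_eq.symm)
  rw [hclosed, hyn] at hreach
  have hround := hreach.tail (.over f n h.ne h.ne_bar)
  rw [h.t_eq, h.lab_bar_eq] at hround
  have hn1 : n = 1 := SlideReach.factor_eq_one hround hpos hred hna
  exact hstrict (by rw [hn, hn1, Int.cast_one])

theorem IsParallel.not_mobile (h : G.IsParallel e f) (hpos : G.Positive) (hred : G.Reduced)
    (hna : G.NonAscending) : ¬ G.Mobile e := by
  rintro (⟨l, hl | hl⟩ | ⟨l, hl | hl⟩)
  · exact not_isStrictMonotoneCycle hpos hred hna hl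
  · exact not_isStrictMonotoneCycle hpos hred hna hl
  · exact h.not_isStrictIntegerCycle hpos hred hna hl
  · exact h.bar.not_isStrictIntegerCycle hpos hred hna hl

theorem CanSlide.t_eq_and_lab_bar_dvd (hf' : f ≠ G.bar e)
    (h : (G.slide e f).CanSlide (G.bar f) (G.bar e)) :
    G.t f = G.t e ∧ G.lab (G.bar e) ∣ G.lab (G.bar f) := by
  have hbf : G.bar f ≠ e := mt G.bar_involutive.eq_iff.1 hf'
  obtain ⟨-, -, ho, hdvd⟩ := h
  simp only [slide, G.bar_ne e, hbf, if_false] at ho hdvd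
  exact ⟨ho.symm, hdvd⟩

theorem CanSlide.isParallel (hpos : G.Positive) (hred : G.Reduced) (hna : G.NonAscending)
    (hef : G.CanSlide e f) (hfe : (G.slide e f).CanSlide (G.bar f) (G.bar e)) :
    G.IsParallel e f := by
  obtain ⟨hf, hf', ho, k, hk⟩ := hef
  obtain ⟨ht, m, hm⟩ := hfe.t_eq_and_lab_bar_dvd hf'
  have hslide : G.SlideReach e (G.o e, G.lab e) (G.t e, k * m * G.lab (G.bar e)) := by
    have hstep := SlideStep.over f k hf hf'
    rw [ho, ht, mul_comm k, ← hk, hm, mul_comm (G.lab (G.bar e)), ← mul_assoc] at hstep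
    exact .single hstep
  have hkm : k * m = 1 := hslide.factor_eq_one hpos hred hna
  have hk0 : 0 ≤ k := (pos_of_mul_pos_right (hk ▸ hpos e) (hpos f).le).le
  have hk1 : k = 1 := Int.eq_one_of_mul_eq_one_right hk0 hkm
  have hm1 : m = 1 := by simpa [hk1] using hkm
  exact ⟨hf, hf', ho, ht, by simp [hk, hk1], by simp [hm, hm1]⟩

end Parallel

end LGraph

theorem stmt10_general {V E : Type} (G : LGraph V E)
    (hpos : G.Positive) (hred : G.Reduced) (hna : G.NonAscending)
    (e f : E) (hme : G.Mobile e) :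
    ¬ (G.CanSlide e f ∧ (G.slide e f).CanSlide (G.bar f) (G.bar e)) := by
  rintro ⟨hef, hfe⟩
  exact (hef.isParallel hpos hred hna hfe).not_mobile hpos hred hna hme

/-- (Lemma 4.3(h)) In a reduced non-ascending positively-labeled graph,
for mobile edges `e, f` with `f ∉ {e, ē}`, the slide of `e` over `f` (to a reduced graph)
followed by a slide of `f̄` over `ē` is impossible. -/
theorem stmt10 {V E : Type} [Finite V] [Finite E] (G : LGraph V E)
    (hpos : G.Positive) (hred : G.Reduced) (hna : G.NonAscending)
    (e f : E) (hme : G.Mobile e) (hmf : G.Mobile f)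
    (hfe : f ≠ e) (hfebar : f ≠ G.bar e) :
    ¬ (G.CanSlide e f ∧ (G.slide e f).Reduced ∧
        (G.slide e f).CanSlide (G.bar f) (G.bar e)) := by
  exact fun ⟨hef, _, hfe'⟩ => stmt10_general G hpos hred hna e f hme ⟨hef, hfe'⟩
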